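/- Let H be a graph such that every connected component of H has a feedback vertex set of size at most d (a d-quasi-forest), and suppose H is connected with feedback vertex set Z of size at most d. Then every minimal blocking set Y of H satisfies |Y| ≤ |Z| + 2 ≤ d + 2. -/

import Mathlib

attribute [local instance] Classical.propDecidable

namespace VCKernel

variable {V : Type*} [Fintype V] [DecidableEq V]

/-- `S` is an independent set of `G`. -/
def IsIndep (G : SimpleGraph V) (S : Finset V) : Prop :=
  ∀ u ∈ S, ∀ v ∈ S, ¬ G.Adj u v

/-- Independence number of the subgraph of `G` induced on the vertex set `A`. -/
noncomputable def alphaOn (G : SimpleGraph V) (A : Set V) : ℕ :=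
  sSup {n | ∃ S : Finset V, ↑S ⊆ A ∧ IsIndep G S ∧ S.card = n}

/-- Independence number `α(G)`. -/
noncomputable def alpha (G : SimpleGraph V) : ℕ := alphaOn G Set.univ

/-- `Y` is a blocking set: deleting it decreases the independence number. -/
def IsBlocking (G : SimpleGraph V) (Y : Finset V) : Prop :=
  alphaOn G (Set.univ \ ↑Y) < alpha G

/-- `Y` is a minimal blocking set. -/
def IsMinBlocking (G : SimpleGraph V) (Y : Finset V) : Prop :=
  IsBlocking G Y ∧ ∀ Y' ⊂ Y, ¬ IsBlocking G Y'

/-- Open neighborhood of the vertex set `X'` in `G`. -/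
def nbhd (G : SimpleGraph V) (X' : Finset V) : Set V :=
  {v | ∃ u ∈ X', G.Adj u v}

/-- Number of conflicts induced by `X'` on the induced subgraph with vertex set `A`. -/
noncomputable def conf (G : SimpleGraph V) (A : Set V) (X' : Finset V) : ℕ :=
  alphaOn G A - alphaOn G (A \ nbhd G X')

/-- `C` is (the vertex set of) a connected component of the subgraph of `G`
induced on `A`. -/
def IsCompOf (G : SimpleGraph V) (A C : Set V) : Prop :=
  C ⊆ A ∧ (G.induce C).Connected ∧ ∀ u ∈ C, ∀ v ∈ A, G.Adj u v → v ∈ C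

/-- Feasible solution to the Independent Set LP of the subgraph induced on `A`. -/
def FeasISOn (G : SimpleGraph V) (A : Set V) (x : V → ℝ) : Prop :=
  (∀ v ∈ A, 0 ≤ x v ∧ x v ≤ 1) ∧
    ∀ u ∈ A, ∀ v ∈ A, G.Adj u v → x u + x v ≤ 1

/-- Half-integrality on `A`. -/
def HalfIntOn (A : Set V) (x : V → ℝ) : Prop :=
  ∀ v ∈ A, x v = 0 ∨ x v = 1/2 ∨ x v = 1

/-- Objective value of an LP solution on vertex set `A`. -/
noncomputable def weightOn (A : Set V) (x : V → ℝ) : ℝ :=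
  ∑ v, if v ∈ A then x v else 0

/-- `x` is an optimum half-integral solution to the Independent Set LP
of the subgraph induced on `A`. -/
def OptHIOn (G : SimpleGraph V) (A : Set V) (x : V → ℝ) : Prop :=
  FeasISOn G A x ∧ HalfIntOn A x ∧
    ∀ y : V → ℝ, FeasISOn G A y → HalfIntOn A y → weightOn A y ≤ weightOn A x

/-- Feasible solution to the Vertex Cover LP of `G`. -/
def FeasVC (G : SimpleGraph V) (x : V → ℝ) : Prop :=
  (∀ v, 0 ≤ x v ∧ x v ≤ 1) ∧ ∀ u v, G.Adj u v → 1 ≤ x u + x v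

/-- Optimum value of the Independent Set LP of `G`. -/
noncomputable def lpIS (G : SimpleGraph V) : ℝ :=
  sSup {w | ∃ x : V → ℝ, FeasISOn G Set.univ x ∧ w = ∑ v, x v}

/-- Optimum value of the Vertex Cover LP of `G`. -/
noncomputable def lpVC (G : SimpleGraph V) : ℝ :=
  sInf {w | ∃ x : V → ℝ, FeasVC G x ∧ w = ∑ v, x v}

/-- `C` is a vertex cover of `G`. -/
def IsVC (G : SimpleGraph V) (C : Finset V) : Prop :=
  ∀ u v, G.Adj u v → u ∈ C ∨ v ∈ C

/-- Vertex cover number of `G`. -/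
noncomputable def vcNum (G : SimpleGraph V) : ℕ :=
  sInf {n | ∃ C : Finset V, IsVC G C ∧ C.card = n}

/-- `Z` is a feedback vertex set of `G`. -/
def IsFVS (G : SimpleGraph V) (Z : Finset V) : Prop :=
  (G.induce ((↑Z : Set V)ᶜ)).IsAcyclic

/-- `Z` is an odd cycle transversal of `G`. -/
def IsOCT (G : SimpleGraph V) (Z : Finset V) : Prop :=
  (G.induce ((↑Z : Set V)ᶜ)).Colorable 2

/-- `G` is a `d`-quasi-forest: each connected component has a feedback
vertex set of size at most `d`. -/
def QuasiForest (G : SimpleGraph V) (d : ℕ) : Prop :=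
  ∀ C : Set V, IsCompOf G Set.univ C →
    ∃ Z : Finset V, Z.card ≤ d ∧ (G.induce (C \ ↑Z)).IsAcyclic

/-- `G` is `d`-quasi-bipartite: each connected component has an odd cycle
transversal of size at most `d`. -/
def QuasiBipartite (G : SimpleGraph V) (d : ℕ) : Prop :=
  ∀ C : Set V, IsCompOf G Set.univ C →
    ∃ Z : Finset V, Z.card ≤ d ∧ (G.induce (C \ ↑Z)).Colorable 2

/-- Feedback vertex set number of `G`. -/
noncomputable def fvsNum (G : SimpleGraph V) : ℕ :=
  sInf {n | ∃ Z : Finset V, IsFVS G Z ∧ Z.card = n}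

/-- Odd cycle transversal number of `G`. -/
noncomputable def octNum (G : SimpleGraph V) : ℕ :=
  sInf {n | ∃ Z : Finset V, IsOCT G Z ∧ Z.card = n}

/-- The subgraph of `G` induced on `A` has treedepth at most `k`
(elimination-forest characterization of treedepth). -/
def tdLE (G : SimpleGraph V) : ℕ → Set V → Prop
  | 0, A => A = ∅
  | (k+1), A => ∀ C : Set V, IsCompOf G A C → ∃ v ∈ C, tdLE G k (C \ {v})

/-!
By minimality, each `y ∈ Y` has a maximum independent set `S_y` with `S_y ∩ Y = {y}`. For a
subfamily of these sets write `I` for its intersection and `U` for its union. No edge joins `I`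
to `U`, so that putting value `1` on `I`, `1/2` on `U \ I` and `0` elsewhere is feasible for the
Independent Set LP; we estimate `|I| + |U|` in two ways.

* For two sets, `|I| + |U| = 2α`. If a set `S` is added to a family of at least two sets, then
  `(S ∩ U) ∪ I` is independent and misses `Y`, hence has fewer than `α` vertices, and by modularity
  `|S ∩ I| + |S ∪ U| > |I| + |U|`. So `|I| + |U| ≥ 2α + |Y| - 2` for the whole family.
* If `A` and `B` are the colour classes of a 2-colouring of `G - Z`, then `(A ∩ U) ∪ I` and
  `(B ∩ U) ∪ I` are independent, so that `|I| + |U| ≤ 2α + |Z|`.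
-/

/-- `S` is a maximum independent set of `G`; these are the sets a blocking set has to hit. -/
def IsMaxIndep (G : SimpleGraph V) (S : Finset V) : Prop :=
  IsIndep G S ∧ S.card = alpha G

/-- The half-integral feasible solution of the Independent Set LP of `G` with value `1` on `P`,
`1/2` on `Q \ P` and `0` outside `Q`, encoded by the pair `P ⊆ Q`. Its objective value
`(|P| + |Q|) / 2` is compared with `α(G)`. -/
structure IsHalfIntPair (G : SimpleGraph V) (P Q : Finset V) : Prop where
  subset : P ⊆ Q
  not_adj : ∀ u ∈ P, ∀ v ∈ Q, ¬ G.Adj u v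

section

omit [Fintype V] [DecidableEq V]

variable {ι : Type*} {G : SimpleGraph V} {A P Q S Y Z : Finset V} {s : Finset ι}
  {F : ι → Finset V} {i : ι} {v : V}

lemma card_inter_add_card_union_add_card_inter_union [DecidableEq V] (hPQ : P ⊆ Q)
    (S : Finset V) :
    (S ∩ P).card + (S ∪ Q).card + (S ∩ Q ∪ P).card = P.card + Q.card + S.card := by
  have hSQ := Finset.card_union_add_card_inter S Q
  have hP := Finset.card_union_add_card_inter (S ∩ Q) P
  rw [Finset.inter_assoc, Finset.inter_eq_right.mpr hPQ] at hP
  omega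

lemma disjoint_inf'_of_pairwiseDisjoint_inter [DecidableEq V] (hs : s.Nontrivial)
    (hdisj : (s : Set ι).PairwiseDisjoint fun i ↦ F i ∩ Y) :
    Disjoint (s.inf' hs.nonempty F) Y := by
  obtain ⟨i, hi, j, hj, hij⟩ := id hs
  refine Finset.disjoint_left.mpr fun v hv hvY ↦ ?_
  exact Finset.disjoint_left.mp (hdisj hi hj hij)
    (Finset.mem_inter.mpr ⟨Finset.inf'_le F hi hv, hvY⟩)
    (Finset.mem_inter.mpr ⟨Finset.inf'_le F hj hv, hvY⟩)

lemma disjoint_inter_sup_of_pairwiseDisjoint_inter [DecidableEq V] (hi : i ∉ s)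
    (hdisj : (insert i s : Set ι).PairwiseDisjoint fun i ↦ F i ∩ Y) :
    Disjoint (F i ∩ s.sup F) Y := by
  refine Finset.disjoint_left.mpr fun v hv hvY ↦ ?_
  obtain ⟨hvi, hvs⟩ := Finset.mem_inter.mp hv
  obtain ⟨j, hj, hvj⟩ := Finset.mem_sup.mp hvs
  exact Finset.disjoint_left.mp
    (hdisj (Set.mem_insert _ _) (Set.mem_insert_of_mem _ hj) (ne_of_mem_of_not_mem hj hi).symm)
    (Finset.mem_inter.mpr ⟨hvi, hvY⟩) (Finset.mem_inter.mpr ⟨hvj, hvY⟩)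

lemma IsHalfIntPair.isIndep_inter_union [DecidableEq V] (h : IsHalfIntPair G P Q)
    (hA : IsIndep G A) : IsIndep G (A ∩ Q ∪ P) := by
  intro u hu v hv huv
  have hQ : A ∩ Q ∪ P ⊆ Q := Finset.union_subset Finset.inter_subset_right h.subset
  rcases Finset.mem_union.mp hu with huA | huP
  · rcases Finset.mem_union.mp hv with hvA | hvP
    · exact hA u (Finset.mem_of_mem_inter_left huA) v (Finset.mem_of_mem_inter_left hvA) huv
    · exact h.not_adj v hvP u (hQ hu) huv.symm
  · exact h.not_adj u huP v (hQ hv) huv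

lemma isHalfIntPair_inf'_sup [DecidableEq V] (hs : s.Nonempty) (hF : ∀ i ∈ s, IsIndep G (F i)) :
    IsHalfIntPair G (s.inf' hs F) (s.sup F) where
  subset :=
    let ⟨_, hi⟩ := hs
    (Finset.inf'_le F hi).trans (Finset.le_sup hi)
  not_adj u hu v hv := by
    obtain ⟨i, hi, hvi⟩ := Finset.mem_sup.mp hv
    exact hF i hi u (Finset.inf'_le F hi hu) v hvi

variable [Finite V]

lemma bddAbove_card_isIndep (G : SimpleGraph V) (A : Set V) :
    BddAbove {n | ∃ S : Finset V, ↑S ⊆ A ∧ IsIndep G S ∧ S.card = n} := by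
  have := Fintype.ofFinite V
  refine ⟨Fintype.card V, ?_⟩
  rintro _ ⟨S, -, -, rfl⟩
  exact S.card_le_univ

lemma IsIndep.card_le_alphaOn {A : Set V} (hS : IsIndep G S) (hSA : ↑S ⊆ A) :
    S.card ≤ alphaOn G A :=
  le_csSup (bddAbove_card_isIndep G A) ⟨S, hSA, hS, rfl⟩

lemma IsIndep.card_le_alpha (hS : IsIndep G S) : S.card ≤ alpha G :=
  hS.card_le_alphaOn (Set.subset_univ _)

lemma exists_isIndep_card_eq_alphaOn (G : SimpleGraph V) (A : Set V) :
    ∃ S : Finset V, ↑S ⊆ A ∧ IsIndep G S ∧ S.card = alphaOn G A := by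
  refine Nat.sSup_mem ?_ (bddAbove_card_isIndep G A)
  exact ⟨0, ∅, by simp, by simp [IsIndep], rfl⟩

lemma IsBlocking.card_lt_alpha (hY : IsBlocking G Y) (hS : IsIndep G S) (hSY : Disjoint S Y) :
    S.card < alpha G := by
  have hsub : (S : Set V) ⊆ Set.univ \ ↑Y :=
    fun _ hv ↦ ⟨trivial, Finset.disjoint_left.mp hSY hv⟩
  exact (hS.card_le_alphaOn hsub).trans_lt hY

lemma exists_isMaxIndep_disjoint_of_not_isBlocking (hY : ¬ IsBlocking G Y) :
    ∃ S, IsMaxIndep G S ∧ Disjoint S Y := by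
  obtain ⟨S, hSY, hS, hcard⟩ := exists_isIndep_card_eq_alphaOn G (Set.univ \ ↑Y)
  have hle : alpha G ≤ S.card := hcard ▸ not_lt.mp hY
  exact ⟨S, ⟨hS, hS.card_le_alpha.antisymm hle⟩, Finset.disjoint_left.mpr fun _ hv ↦ (hSY hv).2⟩

lemma IsMinBlocking.exists_isMaxIndep_inter_eq_singleton [DecidableEq V]
    (hY : IsMinBlocking G Y) (hv : v ∈ Y) : ∃ S, IsMaxIndep G S ∧ S ∩ Y = {v} := by
  obtain ⟨S, hS, hdisj⟩ :=
    exists_isMaxIndep_disjoint_of_not_isBlocking (hY.2 _ (Finset.erase_ssubset hv))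
  have hsub : S ∩ Y ⊆ {v} := fun w hw ↦ by
    obtain ⟨hwS, hwY⟩ := Finset.mem_inter.mp hw
    by_contra hwv
    exact Finset.disjoint_left.mp hdisj hwS
      (Finset.mem_erase.mpr ⟨mt Finset.mem_singleton.mpr hwv, hwY⟩)
  have hne : S ∩ Y ≠ ∅ := fun h ↦
    (hY.1.card_lt_alpha hS.1 (Finset.disjoint_iff_inter_eq_empty.mpr h)).ne hS.2
  exact ⟨S, hS, (Finset.subset_singleton_iff.mp hsub).resolve_left hne⟩

lemma IsOCT.exists_isIndep_cover (hZ : IsOCT G Z) :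
    ∃ A B, IsIndep G A ∧ IsIndep G B ∧ ∀ v ∉ Z, v ∈ A ∨ v ∈ B := by
  have := Fintype.ofFinite V
  obtain ⟨color⟩ := hZ
  let colorClass (c : Fin 2) : Finset V := {v | ∃ h : v ∈ (↑Z : Set V)ᶜ, color ⟨v, h⟩ = c}
  have isIndep_colorClass (c : Fin 2) : IsIndep G (colorClass c) := by
    intro u hu v hv huv
    obtain ⟨huZ, hu⟩ := (Finset.mem_filter.mp hu).2
    obtain ⟨hvZ, hv⟩ := (Finset.mem_filter.mp hv).2
    exact color.valid (v := ⟨u, huZ⟩) (w := ⟨v, hvZ⟩) huv (hu.trans hv.symm)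
  refine ⟨colorClass 0, colorClass 1, isIndep_colorClass 0, isIndep_colorClass 1, fun v hv ↦ ?_⟩
  simpa [colorClass, hv] using Fin.exists_fin_two.mp ⟨color ⟨v, hv⟩, rfl⟩

lemma IsHalfIntPair.card_add_card_le_of_isOCT (h : IsHalfIntPair G P Q) (hZ : IsOCT G Z) :
    P.card + Q.card ≤ 2 * alpha G + Z.card := by
  obtain ⟨A, B, hA, hB, hAB⟩ := hZ.exists_isIndep_cover
  have hP : P.card ≤ ((A ∩ Q ∪ P) ∩ (B ∩ Q ∪ P)).card :=
    Finset.card_le_card (Finset.subset_inter Finset.subset_union_right Finset.subset_union_right)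
  have hQ : (Q \ Z).card ≤ ((A ∩ Q ∪ P) ∪ (B ∩ Q ∪ P)).card :=
    Finset.card_le_card (by grind)
  have hmod := Finset.card_union_add_card_inter (A ∩ Q ∪ P) (B ∩ Q ∪ P)
  have hAα := (h.isIndep_inter_union hA).card_le_alpha
  have hBα := (h.isIndep_inter_union hB).card_le_alpha
  have hQZ := Finset.le_card_sdiff Z Q
  omega

lemma IsHalfIntPair.card_add_card_lt_of_isBlocking [DecidableEq V] (h : IsHalfIntPair G P Q)
    (hY : IsBlocking G Y) (hS : IsMaxIndep G S) (hdisj : Disjoint (S ∩ Q ∪ P) Y) :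
    P.card + Q.card < (S ∩ P).card + (S ∪ Q).card := by
  have hlt := hY.card_lt_alpha (h.isIndep_inter_union hS.1) hdisj
  have hmod := card_inter_add_card_union_add_card_inter_union h.subset S
  have hcard := hS.2
  omega

lemma IsBlocking.two_mul_alpha_add_card_le [DecidableEq V] (hY : IsBlocking G Y)
    (hs : s.Nontrivial) (hF : ∀ i ∈ s, IsMaxIndep G (F i))
    (hdisj : (s : Set ι).PairwiseDisjoint fun i ↦ F i ∩ Y) :
    2 * alpha G + s.card ≤ (s.inf' hs.nonempty F).card + (s.sup F).card + 2 := by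
  induction s using Finset.induction_on with
  | empty => exact absurd hs Finset.not_nontrivial_empty
  | insert i s hi ih =>
    have hne : s.Nonempty := Finset.nonempty_iff_ne_empty.mpr (by rintro rfl; simp at hs)
    have hFi : IsMaxIndep G (F i) := hF i (Finset.mem_insert_self i s)
    have hFs : ∀ j ∈ s, IsMaxIndep G (F j) := fun j hj ↦ hF j (Finset.mem_insert_of_mem hj)
    rw [Finset.coe_insert] at hdisj
    rw [Finset.inf'_insert hne, Finset.sup_insert, Finset.inf_eq_inter, Finset.sup_eq_union,
      Finset.card_insert_of_notMem hi]
    rcases hne.exists_eq_singleton_or_nontrivial with ⟨j, rfl⟩ | hs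
    · have hmod := Finset.card_inter_add_card_union (F i) (F j)
      rw [hFi.2, (hFs j (Finset.mem_singleton_self j)).2] at hmod
      rw [Finset.inf'_singleton, Finset.sup_singleton, Finset.card_singleton]
      omega
    · have hdisjs := hdisj.subset (Set.subset_insert i s)
      have hmiss : Disjoint (F i ∩ s.sup F ∪ s.inf' hne F) Y :=
        Finset.disjoint_union_left.mpr
          ⟨disjoint_inter_sup_of_pairwiseDisjoint_inter hi hdisj,
            disjoint_inf'_of_pairwiseDisjoint_inter hs hdisjs⟩
      have hpair := isHalfIntPair_inf'_sup hne fun j hj ↦ (hFs j hj).1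
      have hlt := hpair.card_add_card_lt_of_isBlocking hY hFi hmiss
      have hle := ih hs hFs hdisjs
      omega

theorem stmt5_general (hZ : IsOCT G Z) (hY : IsMinBlocking G Y) : Y.card ≤ Z.card + 2 := by
  choose! F hF hFY using fun v (hv : v ∈ Y) ↦ hY.exists_isMaxIndep_inter_eq_singleton hv
  have hdisj : (Y : Set V).PairwiseDisjoint fun v ↦ F v ∩ Y := fun u hu v hv huv ↦ by
    simpa [Function.onFun, hFY u hu, hFY v hv] using huv
  rcases le_or_gt Y.card 1 with hcard | hcard
  · omega
  · have hYnt : Y.Nontrivial := Finset.one_lt_card_iff_nontrivial.mp hcard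
    have hpair := isHalfIntPair_inf'_sup hYnt.nonempty fun v hv ↦ (hF v hv).1
    have hlower := hY.1.two_mul_alpha_add_card_le hYnt hF hdisj
    have hupper := hpair.card_add_card_le_of_isOCT hZ
    omega

end

/-- If `G` is connected with a feedback vertex set `Z` of size at most `d`,
then every minimal blocking set `Y` satisfies `|Y| ≤ |Z| + 2 ≤ d + 2`. -/
theorem stmt5 (G : SimpleGraph V) (d : ℕ) (Z Y : Finset V)
    (hconn : G.Connected) (hZ : IsFVS G Z) (hZd : Z.card ≤ d)
    (hY : IsMinBlocking G Y) :
    Y.card ≤ Z.card + 2 ∧ Z.card + 2 ≤ d + 2 :=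
  ⟨stmt5_general hZ.colorable_two hY, Nat.add_le_add_right hZd 2⟩

end VCKernel
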